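/- arXiv:math/0105140 — 2 statements merged into one kernel-verified Lean document; each statement's English description precedes it below -/
import Mathlib

section
/- For every natural number n ≥ 1, the following identity holds in the polynomial ring ℤ[X]: the sum over all partitions P of the set {1,…,n} of (∏_{blocks B of P} (|B| − 1)!) · X^{n − (number of blocks of P)} equals the product ∏_{i=1}^{n−1} (1 + i·X). (This is the paper's computation that the Poincaré polynomial of the n-th component Poiss_d(n) of the d-Poisson operad is (1 + t^{−d})(1 + 2t^{−d})⋯(1 + (n−1)t^{−d}), with X standing for t^{−d}, derived from the decomposition (1.113)–(1.114).) -/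
open Polynomial

/-!
A partition of `insert a s` arises from a unique partition of `s` by placing the new element `a`
either in a block of its own or in one of the existing blocks `B`. Give a block of size `k` the
weight `y * (k - 1)! * x ^ (k - 1)`. A new singleton multiplies the weight of a partition by `y`,
while enlarging `B` multiplies it by `#B * x`; since the block sizes add up to `#s`, adjoining `a`
multiplies the total weight of all partitions by `y + #s * x`.
-/

open Finset

section InsertElement

variable {α : Type*} [DecidableEq α] {s : Finset α} {a : α}

lemma sup_parts_erase_eq_sdiff (P : Finpartition s) {B : Finset α} (hB : B ∈ insert ∅ P.parts) :
    (P.parts.erase B).sup id = s \ B := by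
  rcases mem_insert.1 hB with rfl | hB
  · rw [erase_eq_of_notMem P.empty_notMem_parts, P.sup_parts, sdiff_empty]
  · ext x
    simp only [mem_sup, mem_erase, id_eq, mem_sdiff]
    constructor
    · rintro ⟨t, ⟨htB, ht⟩, hxt⟩
      exact ⟨P.subset ht hxt, fun hxB ↦ htB (P.eq_of_mem_parts ht hB hxt hxB)⟩
    · rintro ⟨hxs, hxB⟩
      obtain ⟨t, ht, hxt⟩ := P.exists_mem hxs
      exact ⟨t, ⟨fun htB ↦ hxB (htB ▸ hxt), ht⟩, hxt⟩

lemma subset_of_mem_insert_empty_parts (P : Finpartition s) {B : Finset α}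
    (hB : B ∈ insert ∅ P.parts) : B ⊆ s := by
  rcases mem_insert.1 hB with rfl | hB
  · exact empty_subset s
  · exact P.subset hB

/-- The partition of `insert a s` obtained from a partition `P` of `s` by adding the new element `a`
to the block `B`. The choice `B = ∅` makes `{a}` a block of its own. -/
def insertIntoPart (ha : a ∉ s) (P : Finpartition s) (B : Finset α)
    (hB : B ∈ insert ∅ P.parts) : Finpartition (insert a s) :=
  (P.ofSubset (erase_subset B P.parts) (sup_parts_erase_eq_sdiff P hB)).extend
    (insert_ne_empty a B)
    (disjoint_insert_right.2 ⟨fun h ↦ ha (mem_sdiff.1 h).1, sdiff_disjoint⟩)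
    (by rw [sup_eq_union, union_insert,
      sdiff_union_of_subset (subset_of_mem_insert_empty_parts P hB)])

lemma parts_insertIntoPart (ha : a ∉ s) (P : Finpartition s) {B : Finset α}
    (hB : B ∈ insert ∅ P.parts) :
    (insertIntoPart ha P B hB).parts = insert (insert a B) (P.parts.erase B) :=
  rfl

lemma part_insertIntoPart (ha : a ∉ s) (P : Finpartition s) {B : Finset α}
    (hB : B ∈ insert ∅ P.parts) : (insertIntoPart ha P B hB).part a = insert a B :=
  Finpartition.part_eq_of_mem _ (mem_insert_self _ _) (mem_insert_self a B)

lemma image_inter_eq_self {F : Finset (Finset α)} (hF : ∀ t ∈ F, t ⊆ s) :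
    F.image (· ∩ s) = F :=
  (image_congr fun t ht ↦ inter_eq_left.2 (hF t ht)).trans image_id

lemma restrict_insertIntoPart (ha : a ∉ s) (P : Finpartition s) {B : Finset α}
    (hB : B ∈ insert ∅ P.parts) :
    (insertIntoPart ha P B hB).restrict (subset_insert a s) = P := by
  have hBs : insert a B ∩ s = B := by
    rw [insert_inter_of_notMem ha, inter_eq_left.2 (subset_of_mem_insert_empty_parts P hB)]
  have hrest : (P.parts.erase B).image (· ∩ s) = P.parts.erase B :=
    image_inter_eq_self fun t ht ↦ P.subset (mem_of_mem_erase ht)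
  apply Finpartition.ext
  change ((insert (insert a B) (P.parts.erase B)).image (· ∩ s)).erase ∅ = P.parts
  rw [image_insert, hBs, hrest]
  rcases mem_insert.1 hB with rfl | hB
  · rw [erase_insert (notMem_erase _ _), erase_eq_of_notMem P.empty_notMem_parts]
  · rw [insert_erase hB, erase_eq_of_notMem P.empty_notMem_parts]

lemma subset_of_mem_parts_erase_part (Q : Finpartition (insert a s)) {t : Finset α}
    (ht : t ∈ Q.parts.erase (Q.part a)) : t ⊆ s := by
  obtain ⟨htne, htQ⟩ := mem_erase.1 ht
  exact (subset_insert_iff_of_notMem fun hat ↦ htne (Q.part_eq_of_mem htQ hat).symm).1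
    (Q.subset htQ)

lemma parts_restrict_insert (ha : a ∉ s) (Q : Finpartition (insert a s)) :
    (Q.restrict (subset_insert a s)).parts =
      (insert ((Q.part a).erase a) (Q.parts.erase (Q.part a))).erase ∅ := by
  have hpart : Q.part a ∩ s = (Q.part a).erase a := by
    calc Q.part a ∩ s
      _ = Q.part a ∩ (insert a s).erase a := by rw [erase_insert ha]
      _ = (Q.part a).erase a := by rw [inter_erase, inter_eq_left.2 (Q.part_subset a)]
  have hrest : (Q.parts.erase (Q.part a)).image (· ∩ s) = Q.parts.erase (Q.part a) :=
    image_inter_eq_self fun _ ↦ subset_of_mem_parts_erase_part Q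
  have hinsert : insert (Q.part a) (Q.parts.erase (Q.part a)) = Q.parts :=
    insert_erase (Q.part_mem.2 (mem_insert_self a s))
  change (Q.parts.image (· ∩ s)).erase ∅ = _
  rw [← hinsert, image_insert, hrest, hpart, hinsert]

lemma erase_part_mem_insert_empty_parts_restrict (ha : a ∉ s) (Q : Finpartition (insert a s)) :
    (Q.part a).erase a ∈ insert ∅ (Q.restrict (subset_insert a s)).parts := by
  rw [parts_restrict_insert ha]
  exact subset_insert_iff.2 Subset.rfl (mem_insert_self _ _)

lemma erase_part_notMem_parts_erase_part (Q : Finpartition (insert a s)) :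
    (Q.part a).erase a ∉ Q.parts.erase (Q.part a) := by
  intro h
  obtain ⟨hne, hmem⟩ := mem_erase.1 h
  obtain ⟨x, hx⟩ := Q.nonempty_of_mem_parts hmem
  exact hne (Q.eq_of_mem_parts hmem (Q.part_mem.2 (mem_insert_self a s)) hx (mem_of_mem_erase hx))

lemma insertIntoPart_restrict (ha : a ∉ s) (Q : Finpartition (insert a s)) :
    insertIntoPart ha (Q.restrict (subset_insert a s)) ((Q.part a).erase a)
      (erase_part_mem_insert_empty_parts_restrict ha Q) = Q := by
  have haQ : a ∈ insert a s := mem_insert_self a s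
  have hrest : ((Q.restrict (subset_insert a s)).parts).erase ((Q.part a).erase a) =
      Q.parts.erase (Q.part a) := by
    rw [parts_restrict_insert ha, erase_right_comm,
      erase_insert (erase_part_notMem_parts_erase_part Q), erase_eq_of_notMem]
    exact fun h ↦ Q.empty_notMem_parts (mem_of_mem_erase h)
  apply Finpartition.ext
  rw [parts_insertIntoPart, hrest, insert_erase (Q.mem_part haQ), insert_erase (Q.part_mem.2 haQ)]

/-- Partitions of `insert a s` correspond to partitions of `s` together with the block that the new
element `a` joins, where `∅` encodes that `a` forms a block of its own. -/
def finpartitionInsertEquiv (ha : a ∉ s) :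
    (Σ P : Finpartition s, ↥(insert ∅ P.parts)) ≃ Finpartition (insert a s) where
  toFun p := insertIntoPart ha p.1 p.2 p.2.2
  invFun Q := ⟨Q.restrict (subset_insert a s), (Q.part a).erase a,
    erase_part_mem_insert_empty_parts_restrict ha Q⟩
  left_inv := by
    rintro ⟨P, B, hB⟩
    have haB : a ∉ B := fun h ↦ ha (subset_of_mem_insert_empty_parts P hB h)
    exact Sigma.subtype_ext (restrict_insertIntoPart ha P hB)
      ((congrArg (·.erase a) (part_insertIntoPart ha P hB)).trans (erase_insert haB))
  right_inv := insertIntoPart_restrict ha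

end InsertElement

section WeightedSum

variable {α R : Type*} [DecidableEq α] [CommSemiring R]

lemma sum_prod_parts_insert {s : Finset α} {a : α} (ha : a ∉ s) (f : Finset α → R) :
    ∑ Q : Finpartition (insert a s), ∏ B ∈ Q.parts, f B =
      ∑ P : Finpartition s, (f {a} * ∏ B ∈ P.parts, f B +
        ∑ B ∈ P.parts, f (insert a B) * ∏ B' ∈ P.parts.erase B, f B') := by
  have hnew (P : Finpartition s) (B : Finset α) : insert a B ∉ P.parts.erase B :=
    fun h ↦ ha (P.subset (mem_of_mem_erase h) (mem_insert_self a B))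
  rw [← (finpartitionInsertEquiv ha).sum_comp, Fintype.sum_sigma]
  refine sum_congr rfl fun P _ ↦ ?_
  calc ∑ B : ↥(insert ∅ P.parts), ∏ B' ∈ insert (insert a B.1) (P.parts.erase B), f B'
    _ = ∑ B ∈ insert ∅ P.parts, ∏ B' ∈ insert (insert a B) (P.parts.erase B), f B' :=
      sum_coe_sort (insert ∅ P.parts) fun B ↦ ∏ B' ∈ insert (insert a B) (P.parts.erase B), f B'
    _ = ∑ B ∈ insert ∅ P.parts, f (insert a B) * ∏ B' ∈ P.parts.erase B, f B' :=
      sum_congr rfl fun B _ ↦ prod_insert (hnew P B)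
    _ = _ := by
      rw [sum_insert P.empty_notMem_parts, erase_eq_of_notMem P.empty_notMem_parts,
        insert_empty_eq]

lemma sum_prod_card_parts_of_succ_eq_mul (w : ℕ → R) (x : R)
    (hw : ∀ k ≠ 0, w (k + 1) = k * x * w k) (s : Finset α) :
    ∑ P : Finpartition s, ∏ B ∈ P.parts, w #B = ∏ i ∈ range #s, (w 1 + i * x) := by
  induction s using Finset.induction_on with
  | empty =>
    rw [← bot_eq_empty, Fintype.sum_unique, Finpartition.default_eq_empty]
    simp
  | insert a s ha ih =>
    have henlarge (P : Finpartition s) (B : Finset α) (hB : B ∈ P.parts) :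
        w #(insert a B) * ∏ B' ∈ P.parts.erase B, w #B' =
          #B * x * ∏ B' ∈ P.parts, w #B' := by
      rw [card_insert_of_notMem fun h ↦ ha (P.subset hB h),
        hw _ (P.nonempty_of_mem_parts hB).card_ne_zero, mul_assoc, mul_prod_erase _ (w #·) hB]
    rw [card_insert_of_notMem ha, prod_range_succ, ← ih, sum_prod_parts_insert ha (w #·), sum_mul]
    refine sum_congr rfl fun P _ ↦ ?_
    rw [sum_congr rfl (henlarge P), ← sum_mul, ← sum_mul, ← Nat.cast_sum, P.sum_card_parts,
      card_singleton, ← add_mul, mul_comm]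

lemma prod_parts_pow_card_sub_one {M : Type*} [CommMonoid M] {s : Finset α} (P : Finpartition s)
    (x : M) :
    ∏ B ∈ P.parts, x ^ (#B - 1) = x ^ (#s - #P.parts) := by
  have hcard : ∀ B ∈ P.parts, 1 ≤ #B := fun B hB ↦ (P.nonempty_of_mem_parts hB).card_pos
  rw [prod_pow_eq_pow_sum, sum_tsub_distrib _ hcard, P.sum_card_parts, ← card_eq_sum_ones]

theorem sum_partitions_poincare_polynomial_general (s : Finset α) (x y : R) :
    ∑ P : Finpartition s, ((∏ B ∈ P.parts, (#B - 1).factorial : ℕ) : R) *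
        (y ^ #P.parts * x ^ (#s - #P.parts)) =
      ∏ i ∈ range #s, (y + i * x) := by
  let w (k : ℕ) : R := (k - 1).factorial * (y * x ^ (k - 1))
  have hw (k : ℕ) (hk : k ≠ 0) : w (k + 1) = k * x * w k := by
    obtain ⟨k, rfl⟩ := Nat.exists_eq_succ_of_ne_zero hk
    simp only [w, Nat.succ_eq_add_one, Nat.add_sub_cancel, Nat.factorial_succ, pow_succ]
    push_cast
    ring
  have hw_one : w 1 = y := by simp [w]
  rw [← hw_one, ← sum_prod_card_parts_of_succ_eq_mul w x hw, hw_one]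
  refine sum_congr rfl fun P _ ↦ ?_
  rw [prod_mul_distrib, prod_mul_distrib, prod_const, prod_parts_pow_card_sub_one, Nat.cast_prod]

end WeightedSum

/-- **Poincaré polynomial of the `n`-th component of the Poisson operad**
(from the decomposition (1.113)–(1.114) of the paper): in `ℤ[X]`,

`∑_{P partition of {1,…,n}} (∏_{B block of P} (|B|−1)!) · X^(n − #blocks(P))
  = ∏_{i=1}^{n−1} (1 + i·X)`. -/
theorem sum_partitions_poincare_polynomial
    (n : ℕ) (hn : 1 ≤ n) :
    ∑ P : Finpartition (Finset.univ : Finset (Fin n)),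
      C ((∏ B ∈ P.parts, (B.card - 1).factorial : ℕ) : ℤ) * X ^ (n - P.parts.card)
    = ∏ i ∈ Finset.Icc 1 (n - 1), (1 + (i : ℤ[X]) * X) := by
  rw [Icc_sub_one_right_eq_Ico_of_not_isMin (by simpa using Nat.one_le_iff_ne_zero.1 hn)]
  simpa [prod_range_eq_mul_Ico _ hn] using
    sum_partitions_poincare_polynomial_general (univ : Finset (Fin n)) (X : ℤ[X]) 1
end

section
/- For every m ≥ 1, the alternating sum over all connected simple graphs G on the labelled vertex set {1,…,m} of (−1)^{e(G)}, where e(G) is the number of edges of G, equals (−1)^{m−1} · (m−1)!. (This is the Euler characteristic form of the paper's cited fact (Section 1.1, references [V3, V4]) that the homology of the complex of connected graphs with m labelled vertices is concentrated in dimension m − 2, where it is isomorphic to ℤ^{(m−1)!}.) -/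
/-!
Whitney's subgraph expansion `∑_{G ≤ H} (-1) ^ e(G) * q ^ c(G)`, with `c(G)` the number of connected
components, counts the proper colorings of `H` with `q` colors: `q ^ c(G)` counts the colorings
that are constant along the edges of `G`, and for a fixed coloring the signs of the subgraphs of
its graph of monochromatic edges cancel unless that graph is empty. For the complete graph on `m`
vertices the expansion is therefore the falling factorial `q (q - 1) ⋯ (q - m + 1)`. The connected
graphs contribute exactly its linear coefficient, which is `(-1) (-2) ⋯ (-(m - 1))`.
-/

section

open Polynomial SimpleGraph

theorem descPochhammer_eval_neg_one (R : Type*) [Ring R] (n : ℕ) :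
    (descPochhammer R n).eval (-1) = (-1) ^ n * (n.factorial : R) := by
  have h := ascPochhammer_eval_neg_eq_descPochhammer R (-1) n
  rw [neg_neg, ascPochhammer_eval_one] at h
  rw [h, ← mul_assoc, ← pow_add, Even.neg_one_pow ⟨n, rfl⟩, one_mul]

theorem coeff_one_descPochhammer_succ (R : Type*) [CommRing R] (n : ℕ) :
    (descPochhammer R (n + 1)).coeff 1 = (-1) ^ n * (n.factorial : R) := by
  rw [descPochhammer_succ_left, coeff_X_mul, coeff_zero_eq_eval_zero, eval_comp, eval_sub, eval_X,
    eval_one, zero_sub, descPochhammer_eval_neg_one]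

variable {V α : Type*}

theorem connected_iff_natCard_connectedComponent_eq_one {G : SimpleGraph V} :
    G.Connected ↔ Nat.card G.ConnectedComponent = 1 := by
  rw [Nat.card_eq_one_iff_unique, connected_iff]
  refine and_congr ⟨Preconnected.subsingleton_connectedComponent, fun _ v w ↦ ?_⟩
    ⟨fun _ ↦ inferInstance, fun ⟨c⟩ ↦ c.nonempty_supp.nonempty⟩
  exact ConnectedComponent.exact (Subsingleton.elim _ _)

theorem disjoint_comap_top_iff {G : SimpleGraph V} {f : V → α} :
    Disjoint G ((⊤ : SimpleGraph α).comap f) ↔ ∀ v w, G.Adj v w → f v = f w := by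
  simp [disjoint_left]

theorem eq_of_reachable_of_disjoint_comap_top {G : SimpleGraph V} {f : V → α}
    (hf : Disjoint G ((⊤ : SimpleGraph α).comap f)) {v w : V} (h : G.Reachable v w) :
    f v = f w := by
  obtain ⟨p⟩ := h
  induction p with
  | nil => rfl
  | cons hadj _ ih => exact (disjoint_comap_top_iff.1 hf _ _ hadj).trans ih

/-- Maps that are constant along the edges of `G` are the same as maps on its connected components,
so they can be counted. Here `⊤.comap f` is the graph of the pairs of vertices that `f` colors
differently, and constancy along the edges of `G` is disjointness from it. -/
def disjointComapTopEquiv (G : SimpleGraph V) (α : Type*) :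
    {f : V → α // Disjoint G ((⊤ : SimpleGraph α).comap f)} ≃ (G.ConnectedComponent → α) where
  toFun f := ConnectedComponent.lift f.1 fun _ _ p _ ↦
    eq_of_reachable_of_disjoint_comap_top f.2 p.reachable
  invFun g := ⟨g ∘ G.connectedComponentMk, disjoint_comap_top_iff.2 fun _ _ h ↦
    congrArg g (ConnectedComponent.connectedComponentMk_eq_of_adj h)⟩
  left_inv _ := rfl
  right_inv _ := funext <| ConnectedComponent.ind fun _ ↦ rfl

/-- Proper colorings of `H` are the maps that color the endpoints of every edge differently, in the
order-theoretic form to which `sdiff_eq_bot_iff` applies. -/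
def leComapTopEquivColoring (H : SimpleGraph V) (α : Type*) :
    {f : V → α // H ≤ (⊤ : SimpleGraph α).comap f} ≃ H.Coloring α where
  toFun f := ⟨f.1, fun h ↦ f.2 h⟩
  invFun C := ⟨C, C.le_comap⟩

/-- Proper colorings of the complete graph are injections, which a falling factorial counts. -/
def topColoringEquivEmbedding (V α : Type*) : (⊤ : SimpleGraph V).Coloring α ≃ (V ↪ α) where
  toFun C := ⟨C, C.injective_of_top_hom⟩
  invFun f := Coloring.mk f fun h ↦ f.injective.ne h.ne

open Classical in
theorem sum_le_neg_one_pow_ncard_edgeSet [Fintype V] (K : SimpleGraph V) :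
    ∑ G with G ≤ K, (-1 : ℤ) ^ G.edgeSet.ncard = if K = ⊥ then 1 else 0 := by
  have hpow := Finset.sum_powerset_neg_one_pow_card (x := K.edgeFinset)
  simp only [edgeFinset_eq_empty] at hpow
  rw [← hpow]
  have edgeSet_fromEdgeSet_of_subset {s : Finset (Sym2 V)} (hs : s ⊆ K.edgeFinset) :
      (fromEdgeSet (s : Set (Sym2 V))).edgeSet = s := by
    ext e
    simpa using fun he ↦ K.not_isDiag_of_mem_edgeFinset (hs he)
  refine Finset.sum_nbij' (fun G ↦ G.edgeFinset) (fun s ↦ fromEdgeSet (s : Set (Sym2 V)))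
    (by simp) (fun s hs ↦ ?_) (by simp) (fun s hs ↦ ?_) (fun G _ ↦ ?_)
  · rw [Finset.mem_powerset] at hs
    rw [Finset.mem_filter_univ, ← edgeSet_subset_edgeSet, edgeSet_fromEdgeSet_of_subset hs]
    simpa using Finset.coe_subset.2 hs
  · rw [← Finset.coe_inj, coe_edgeFinset,
      edgeSet_fromEdgeSet_of_subset (Finset.mem_powerset.1 hs)]
  · rw [← coe_edgeFinset, Set.ncard_coe_finset]

open Classical in
theorem card_filter_disjoint_comap_top [Fintype V] [Fintype α] (G : SimpleGraph V) :
    Finset.card {f : V → α | Disjoint G ((⊤ : SimpleGraph α).comap f)} =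
      Fintype.card α ^ Nat.card G.ConnectedComponent := by
  rw [← Fintype.card_subtype, Fintype.card_congr (disjointComapTopEquiv G α), Fintype.card_fun,
    Nat.card_eq_fintype_card]

open Classical in
theorem card_filter_le_comap_top [Fintype V] [Fintype α] (H : SimpleGraph V) :
    Finset.card {f : V → α | H ≤ (⊤ : SimpleGraph α).comap f} = Nat.card (H.Coloring α) := by
  rw [← Fintype.card_subtype, ← Nat.card_eq_fintype_card,
    Nat.card_congr (leComapTopEquivColoring H α)]

open Classical in
/-- The chromatic polynomial of `H`, defined by Whitney's expansion over the spanning subgraphs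
of `H`. -/
noncomputable def chromaticPolynomial [Fintype V] (H : SimpleGraph V) : ℤ[X] :=
  ∑ G with G ≤ H, C ((-1) ^ G.edgeSet.ncard) * X ^ Nat.card G.ConnectedComponent

open Classical in
theorem chromaticPolynomial_eval_card [Fintype V] (H : SimpleGraph V) (α : Type*) [Fintype α] :
    (chromaticPolynomial H).eval (Fintype.card α : ℤ) = Nat.card (H.Coloring α) := by
  calc (chromaticPolynomial H).eval (Fintype.card α : ℤ)
    _ = ∑ G with G ≤ H, ∑ f : V → α with Disjoint G ((⊤ : SimpleGraph α).comap f),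
          (-1) ^ G.edgeSet.ncard := by
      simp [chromaticPolynomial, eval_finsetSum, card_filter_disjoint_comap_top, mul_comm]
    _ = ∑ f : V → α, ∑ G with G ≤ H \ (⊤ : SimpleGraph α).comap f, (-1) ^ G.edgeSet.ncard :=
      Finset.sum_comm' fun G f ↦ by simp [le_sdiff]
    _ = ∑ f : V → α, if H ≤ (⊤ : SimpleGraph α).comap f then 1 else 0 := by
      simp only [sum_le_neg_one_pow_ncard_edgeSet, sdiff_eq_bot_iff]
    _ = Nat.card (H.Coloring α) := by
      rw [Finset.sum_boole, card_filter_le_comap_top]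

theorem chromaticPolynomial_top (V : Type*) [Fintype V] :
    chromaticPolynomial (⊤ : SimpleGraph V) = descPochhammer ℤ (Fintype.card V) := by
  refine eq_of_infinite_eval_eq _ _ <|
    (Set.infinite_range_of_injective (Nat.cast_injective (R := ℤ))).mono ?_
  rintro _ ⟨q, rfl⟩
  have hcard := chromaticPolynomial_eval_card (⊤ : SimpleGraph V) (Fin q)
  rw [Fintype.card_fin] at hcard
  rw [Set.mem_ofPred_eq, hcard, Nat.card_congr (topColoringEquivEmbedding V (Fin q)),
    Nat.card_eq_fintype_card, Fintype.card_embedding_eq, Fintype.card_fin,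
    descPochhammer_eval_eq_descFactorial]

open Classical in
theorem coeff_one_chromaticPolynomial [Fintype V] (H : SimpleGraph V) :
    (chromaticPolynomial H).coeff 1 = ∑ G with G ≤ H ∧ G.Connected, (-1) ^ G.edgeSet.ncard := by
  rw [← Finset.filter_filter, Finset.sum_filter]
  simp only [chromaticPolynomial, finsetSum_coeff, coeff_C_mul, coeff_X_pow, mul_ite, mul_one,
    mul_zero, connected_iff_natCard_connectedComponent_eq_one, eq_comm]

open Classical in
theorem sum_connected_graphs_neg_one_pow_edges_general (V : Type*) [Fintype V] [Nonempty V] :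
    ∑ G : SimpleGraph V with G.Connected, (-1 : ℤ) ^ G.edgeSet.ncard =
      (-1) ^ (Fintype.card V - 1) * ((Fintype.card V - 1).factorial : ℤ) := by
  calc ∑ G : SimpleGraph V with G.Connected, (-1 : ℤ) ^ G.edgeSet.ncard
    _ = (chromaticPolynomial (⊤ : SimpleGraph V)).coeff 1 := by
      simp only [coeff_one_chromaticPolynomial, le_top, true_and]
    _ = (descPochhammer ℤ (Fintype.card V - 1 + 1)).coeff 1 := by
      rw [chromaticPolynomial_top, Nat.sub_add_cancel Fintype.card_pos]
    _ = (-1) ^ (Fintype.card V - 1) * ((Fintype.card V - 1).factorial : ℤ) :=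
      coeff_one_descPochhammer_succ ℤ _

end

open Classical in
/-- **Euler characteristic of the complex of connected graphs** (Section 1.1 of the
paper, after [V3, V4]): for `m ≥ 1`, the alternating sum over all connected simple
graphs `G` on the labelled vertex set `{1,…,m}` of `(−1)^{e(G)}`, where `e(G)` is the
number of edges of `G`, equals `(−1)^{m−1} · (m−1)!`. -/
theorem sum_connected_graphs_neg_one_pow_edges (m : ℕ) (hm : 1 ≤ m) :
    ∑ G ∈ (Finset.univ : Finset (SimpleGraph (Fin m))).filter (fun G => G.Connected),
      (-1 : ℤ) ^ G.edgeSet.ncard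
    = (-1) ^ (m - 1) * ((m - 1).factorial : ℤ) := by
  have : Nonempty (Fin m) := ⟨⟨0, hm⟩⟩
  convert sum_connected_graphs_neg_one_pow_edges_general (Fin m) <;> simp
end
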